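/- Let 2 ≤ k < n and let H : ℝ → Herm(n) be real-analytic in a neighborhood of 0 with H(0) ∈ Σ_k. Then for all sufficiently small t, d(H(t), Σ_k)² = Σ_{j=1}^k (λ_j(H(t)) − λ̄(t))², where λ̄(t) is the mean of the lowest k eigenvalues of H(t); the function t ↦ d(H(t), Σ_k)² is real-analytic at 0; and if λ̃_1,…,λ̃_k are real-analytic functions near 0 whose values {λ̃_1(t),…,λ̃_k(t)} form, for each small t, the multiset of the lowest k eigenvalues of H(t), then ord₀(t ↦ d(H(t), Σ_k)²) = 2 · min_{1≤i<j≤k} ord₀(λ̃_i − λ̃_j), i.e., the order of distancing from Σ_k equals the order of energy splitting. -/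

import Mathlib

open Matrix

attribute [local instance] Matrix.normedAddCommGroup Matrix.normedSpace

noncomputable section

/-- Sorted eigenvalues (increasing, counted with multiplicity) of a Hermitian matrix
(junk value for non-Hermitian matrices). -/
def eigs {n : ℕ} (H : Matrix (Fin n) (Fin n) ℂ) : Fin n → ℝ :=
  if hH : H.IsHermitian then hH.eigenvalues ∘ Tuple.sort hH.eigenvalues else fun _ => 0

/-- Frobenius norm of a complex matrix. -/
def frobNorm {n : ℕ} (M : Matrix (Fin n) (Fin n) ℂ) : ℝ :=
  Real.sqrt (∑ a, ∑ b, ‖M a b‖ ^ 2)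

/-- Mean of the lowest k eigenvalues. -/
def lamBar {n : ℕ} (k : ℕ) (H : Matrix (Fin n) (Fin n) ℂ) : ℝ :=
  (∑ j : Fin n, if (j : ℕ) < k then eigs H j else 0) / k

/-- The set Σ_k of k-fold ground-state degenerate Hermitian matrices:
λ₁ = … = λ_k < λ_{k+1}. -/
def SigmaSet (n k : ℕ) : Set (Matrix (Fin n) (Fin n) ℂ) :=
  {H | H.IsHermitian ∧ (∀ i j : Fin n, (i : ℕ) < k → (j : ℕ) < k → eigs H i = eigs H j) ∧
    ∀ i j : Fin n, (i : ℕ) < k → (j : ℕ) = k → eigs H i < eigs H j}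

/-- Order of vanishing of a function at `0 ∈ ℝ`. -/
def ord0 (f : ℝ → ℝ) : ℕ∞ :=
  sInf {m : ℕ∞ | ∃ j : ℕ, m = (j : ℕ∞) ∧ iteratedDeriv j f 0 ≠ 0}

lemma eigs_mono {n : ℕ} (H : Matrix (Fin n) (Fin n) ℂ) : Monotone (eigs H) := by
  unfold eigs
  split_ifs with h
  · exact Tuple.monotone_sort _
  · exact monotone_const

lemma eigs_spectral {n : ℕ} (H : Matrix (Fin n) (Fin n) ℂ) (hH : H.IsHermitian) :
    ∃ U : Matrix (Fin n) (Fin n) ℂ, Uᴴ * U = 1 ∧ U * Uᴴ = 1 ∧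
      H = U * diagonal (fun i => (eigs H i : ℂ)) * Uᴴ := by
  set σ := Tuple.sort hH.eigenvalues with hσ
  set V : Matrix (Fin n) (Fin n) ℂ := (hH.eigenvectorUnitary : Matrix (Fin n) (Fin n) ℂ) with hV
  have hV1 : Vᴴ * V = 1 := Unitary.coe_star_mul_self hH.eigenvectorUnitary
  have hV2 : V * Vᴴ = 1 := Unitary.coe_mul_star_self hH.eigenvectorUnitary
  have hs : H = V * diagonal (fun i => (hH.eigenvalues i : ℂ)) * Vᴴ := by
    have := hH.spectral_theorem
    rw [Unitary.conjStarAlgAut_apply] at this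
    exact this
  have e : eigs H = hH.eigenvalues ∘ σ := by
    unfold eigs; rw [dif_pos hH]
  refine ⟨V.submatrix id σ, ?_, ?_, ?_⟩
  · rw [conjTranspose_submatrix, ← submatrix_mul _ _ σ id σ Function.bijective_id, hV1]
    exact submatrix_one_equiv σ
  · rw [conjTranspose_submatrix, ← submatrix_mul _ _ id σ id σ.bijective, hV2, submatrix_id_id]
  · have : diagonal (fun i => (eigs H i : ℂ)) =
        (diagonal (fun i => (hH.eigenvalues i : ℂ))).submatrix σ σ := by
      rw [submatrix_diagonal_equiv, e]; rfl
    rw [this, conjTranspose_submatrix, ← submatrix_mul _ _ id σ σ σ.bijective,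
      ← submatrix_mul _ _ id σ id σ.bijective, submatrix_id_id]
    exact hs

lemma isHerm_diag {n : ℕ} (U : Matrix (Fin n) (Fin n) ℂ) (g : Fin n → ℝ) :
    (U * diagonal (fun i => (g i : ℂ)) * Uᴴ).IsHermitian := by
  apply isHermitian_mul_mul_conjTranspose
  rw [isHermitian_diagonal_iff]
  intro i
  simp [IsSelfAdjoint]

lemma eigs_unique {n : ℕ} (U : Matrix (Fin n) (Fin n) ℂ) (hU : Uᴴ * U = 1) (g : Fin n → ℝ)
    (hg : Monotone g) : eigs (U * diagonal (fun i => (g i : ℂ)) * Uᴴ) = g := by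
  have hH := isHerm_diag U g
  have hc : (U * diagonal (fun i => (g i : ℂ)) * Uᴴ).charpoly =
      ∏ i, (Polynomial.X - Polynomial.C (g i : ℂ)) := by
    rw [charpoly_mul_comm, ← mul_assoc, hU, one_mul, charpoly_diagonal]
  have h2 := hH.roots_charpoly_eq_eigenvalues
  have hr : (∏ i, (Polynomial.X - Polynomial.C (g i : ℂ))).roots =
      Multiset.map (fun i => (g i : ℂ)) Finset.univ.val := by
    rw [Polynomial.roots_prod]
    · simp
    · simp [Finset.prod_ne_zero_iff, Polynomial.X_sub_C_ne_zero]
  rw [hc, hr] at h2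
  have h3 : Multiset.map g Finset.univ.val = Multiset.map hH.eigenvalues Finset.univ.val := by
    have := congrArg (Multiset.map Complex.re) h2
    simpa [Multiset.map_map, Function.comp_def] using this
  have e : eigs (U * diagonal (fun i => (g i : ℂ)) * Uᴴ) =
      hH.eigenvalues ∘ Tuple.sort hH.eigenvalues := by
    unfold eigs; rw [dif_pos hH]
  rw [e]
  rw [Fin.univ_val_map, Fin.univ_val_map, Multiset.coe_eq_coe] at h3
  have h4 := (Equiv.Perm.ofFn_comp_perm (Tuple.sort hH.eigenvalues) hH.eigenvalues).trans h3.symm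
  have h5 := List.Perm.eq_of_sortedLE (Tuple.monotone_sort hH.eigenvalues).sortedLE_ofFn
    hg.sortedLE_ofFn h4
  exact List.ofFn_injective h5

lemma frob_sq {n : ℕ} (M : Matrix (Fin n) (Fin n) ℂ) :
    ((frobNorm M ^ 2 : ℝ) : ℂ) = trace (Mᴴ * M) := by
  unfold frobNorm
  rw [Real.sq_sqrt (by positivity)]
  simp only [trace, diag_apply, mul_apply, conjTranspose_apply]
  rw [Finset.sum_comm]
  push_cast
  refine Finset.sum_congr rfl fun i _ => Finset.sum_congr rfl fun j _ => ?_
  rw [← Complex.conj_mul']; rfl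

lemma frob_unitary {n : ℕ} (U V M : Matrix (Fin n) (Fin n) ℂ) (hU : U * Uᴴ = 1)
    (hV : V * Vᴴ = 1) : frobNorm (Uᴴ * M * V) ^ 2 = frobNorm M ^ 2 := by
  have : ((frobNorm (Uᴴ * M * V) ^ 2 : ℝ) : ℂ) = ((frobNorm M ^ 2 : ℝ) : ℂ) := by
    rw [frob_sq, frob_sq]
    simp only [conjTranspose_mul, conjTranspose_conjTranspose]
    calc trace (Vᴴ * (Mᴴ * U) * (Uᴴ * M * V)) = trace (Vᴴ * (Mᴴ * (U * Uᴴ) * M * V)) := by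
          simp only [mul_assoc]
      _ = trace ((Mᴴ * M) * (V * Vᴴ)) := by
          rw [hU, mul_one, trace_mul_comm]; simp only [mul_assoc]
      _ = _ := by rw [hV, mul_one]
  exact_mod_cast this

lemma rearr {n : ℕ} (a b : Fin n → ℝ) (ha : Monotone a) (hb : Monotone b)
    (σ : Equiv.Perm (Fin n)) : ∑ i, (a i - b i) ^ 2 ≤ ∑ i, (a i - b (σ i)) ^ 2 := by
  have h1 := (ha.monovary hb).sum_mul_comp_perm_le_sum_mul (σ := σ)
  have h2 : ∑ i, b (σ i) ^ 2 = ∑ i, b i ^ 2 := Equiv.sum_comp σ (fun i => b i ^ 2)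
  simp only [sub_sq, Finset.sum_add_distrib, Finset.sum_sub_distrib, mul_assoc,
    ← Finset.mul_sum, h2]
  linarith

lemma ds_ineq {n : ℕ} (a b : Fin n → ℝ) (ha : Monotone a) (hb : Monotone b)
    (D : Matrix (Fin n) (Fin n) ℝ) (hD : D ∈ doublyStochastic ℝ (Fin n)) :
    ∑ i, (a i - b i) ^ 2 ≤ ∑ i, ∑ j, D i j * (a i - b j) ^ 2 := by
  obtain ⟨w, hw0, hw1, rfl⟩ := exists_eq_sum_perm_of_mem_doublyStochastic hD
  have key : ∀ σ : Equiv.Perm (Fin n),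
      ∑ i, ∑ j, (σ.permMatrix ℝ) i j * (a i - b j) ^ 2 = ∑ i, (a i - b (σ i)) ^ 2 := by
    intro σ
    refine Finset.sum_congr rfl fun i _ => ?_
    simp [Equiv.Perm.permMatrix, PEquiv.toMatrix_apply, Equiv.toPEquiv_apply, eq_comm]
  calc ∑ i, (a i - b i) ^ 2 = ∑ σ, w σ * ∑ i, (a i - b i) ^ 2 := by
        rw [← Finset.sum_mul, hw1, one_mul]
    _ ≤ ∑ σ, w σ * ∑ i, (a i - b (σ i)) ^ 2 :=
        Finset.sum_le_sum fun σ _ => mul_le_mul_of_nonneg_left (rearr a b ha hb σ) (hw0 σ)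
    _ = _ := by
        simp_rw [← key, Finset.mul_sum, Matrix.sum_apply, Matrix.smul_apply, Finset.sum_mul,
          smul_eq_mul, mul_assoc]
        rw [Finset.sum_comm]
        refine Finset.sum_congr rfl fun i _ => ?_
        rw [Finset.sum_comm]

lemma unitary_ds {n : ℕ} (W : Matrix (Fin n) (Fin n) ℂ) (h1 : Wᴴ * W = 1) (h2 : W * Wᴴ = 1) :
    (Matrix.of fun i j => ‖W i j‖ ^ 2) ∈ doublyStochastic ℝ (Fin n) := by
  rw [mem_doublyStochastic_iff_sum]
  refine ⟨fun i j => by simp only [of_apply]; positivity, fun i => ?_, fun j => ?_⟩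
  · have := congrFun (congrFun h2 i) i
    simp only [mul_apply, conjTranspose_apply, one_apply_eq] at this
    have h3 : ∀ j, W i j * star (W i j) = ((‖W i j‖ ^ 2 : ℝ) : ℂ) := fun j => by
      push_cast; exact Complex.mul_conj' _
    simp only [h3] at this
    exact_mod_cast this
  · have := congrFun (congrFun h1 j) j
    simp only [mul_apply, conjTranspose_apply, one_apply_eq] at this
    have h3 : ∀ i, star (W i j) * W i j = ((‖W i j‖ ^ 2 : ℝ) : ℂ) := fun i => by
      push_cast; exact Complex.conj_mul' _
    simp only [h3] at this
    exact_mod_cast this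

/-- Hoffman-Wielandt -/
lemma hoffman_wielandt {n : ℕ} (A B : Matrix (Fin n) (Fin n) ℂ) (hA : A.IsHermitian)
    (hB : B.IsHermitian) : ∑ i, (eigs A i - eigs B i) ^ 2 ≤ frobNorm (A - B) ^ 2 := by
  obtain ⟨U, hU1, hU2, hUA⟩ := eigs_spectral A hA
  obtain ⟨V, hV1, hV2, hVB⟩ := eigs_spectral B hB
  have hds := unitary_ds (Uᴴ * V)
    (by rw [conjTranspose_mul, conjTranspose_conjTranspose, mul_assoc, ← mul_assoc U, hU2,
      one_mul, hV1])
    (by rw [conjTranspose_mul, conjTranspose_conjTranspose, mul_assoc, ← mul_assoc V, hV2,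
      one_mul, hU1])
  refine (ds_ineq _ _ (eigs_mono A) (eigs_mono B) _ hds).trans_eq ?_
  rw [← frob_unitary U V (A - B) hU2 hV2]
  have : Uᴴ * (A - B) * V = diagonal (fun i => (eigs A i : ℂ)) * (Uᴴ * V) -
      (Uᴴ * V) * diagonal (fun i => (eigs B i : ℂ)) := by
    rw [mul_sub, sub_mul]
    congr 1
    · conv_lhs => rw [hUA]
      rw [← mul_assoc, ← mul_assoc, hU1, one_mul, mul_assoc]
    · conv_lhs => rw [hVB]
      rw [mul_assoc, mul_assoc _ Vᴴ V, hV1, mul_one, mul_assoc]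
  rw [this]
  unfold frobNorm
  rw [Real.sq_sqrt (by positivity)]
  refine Finset.sum_congr rfl fun i _ => Finset.sum_congr rfl fun j _ => ?_
  rw [Matrix.sub_apply, diagonal_mul, mul_diagonal, mul_comm (eigs A i : ℂ), ← mul_sub, norm_mul, mul_pow,
    of_apply, ← Complex.ofReal_sub, Complex.norm_real, Real.norm_eq_abs, sq_abs]
  

lemma eigs_lip {n : ℕ} (A B : Matrix (Fin n) (Fin n) ℂ) (hA : A.IsHermitian)
    (hB : B.IsHermitian) (i : Fin n) : |eigs A i - eigs B i| ≤ frobNorm (A - B) := by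
  have h := hoffman_wielandt A B hA hB
  have h2 := Finset.single_le_sum (f := fun i => (eigs A i - eigs B i) ^ 2)
    (fun i _ => sq_nonneg _) (Finset.mem_univ i)
  exact abs_le_of_sq_le_sq (h2.trans h) (Real.sqrt_nonneg _)

lemma sylvester {n : ℕ} (R S Y : Matrix (Fin n) (Fin n) ℂ) (hR : R.IsHermitian)
    (hS : S.IsHermitian) (hR0 : ∀ i, 0 < eigs R i) (hS0 : ∀ i, 0 < eigs S i)
    (h : R * Y + Y * S = 0) : Y = 0 := by
  obtain ⟨U, hU1, hU2, hUA⟩ := eigs_spectral R hR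
  obtain ⟨V, hV1, hV2, hVB⟩ := eigs_spectral S hS
  have h1 : diagonal (fun i => (eigs R i : ℂ)) * (Uᴴ * Y * V) +
      (Uᴴ * Y * V) * diagonal (fun i => (eigs S i : ℂ)) = 0 := by
    have e1 : diagonal (fun i => (eigs R i : ℂ)) * Uᴴ = Uᴴ * R := by
      conv_rhs => rw [hUA]
      rw [← mul_assoc, ← mul_assoc, hU1, one_mul]
    have e2 : V * diagonal (fun i => (eigs S i : ℂ)) = S * V := by
      conv_rhs => rw [hVB]
      rw [mul_assoc _ Vᴴ V, hV1, mul_one]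
    calc _ = (diagonal (fun i => (eigs R i : ℂ)) * Uᴴ) * Y * V +
        Uᴴ * Y * (V * diagonal (fun i => (eigs S i : ℂ))) := by simp only [mul_assoc]
      _ = Uᴴ * (R * Y + Y * S) * V := by
        rw [e1, e2]; simp only [mul_assoc, mul_add, add_mul]
      _ = 0 := by rw [h]; simp
  have h2 : Uᴴ * Y * V = 0 := by
    ext i j
    have := congrFun (congrFun h1 i) j
    rw [Matrix.add_apply, diagonal_mul, mul_diagonal, mul_comm (eigs R i : ℂ), ← mul_add] at this
    rcases mul_eq_zero.1 this with h' | h'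
    · exact h'
    · exfalso
      have : eigs R i + eigs S j = 0 := by exact_mod_cast h'
      linarith [hR0 i, hS0 j]
  calc Y = (U * Uᴴ) * Y * (V * Vᴴ) := by rw [hU2, hV2]; simp
    _ = U * (Uᴴ * Y * V) * Vᴴ := by simp only [mul_assoc]
    _ = 0 := by rw [h2]; simp

lemma an_mul {n : ℕ} {E : Type*} [NormedAddCommGroup E] [NormedSpace ℝ E]
    {A B : E → Matrix (Fin n) (Fin n) ℂ} {x : E} (hA : AnalyticAt ℝ A x)
    (hB : AnalyticAt ℝ B x) : AnalyticAt ℝ (fun t => A t * B t) x := by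
  let m := (LinearMap.mul ℝ (Matrix (Fin n) (Fin n) ℂ)).toContinuousBilinearMap
  have := (m.analyticAt_bilinear (A x, B x)).comp₂ hA hB
  exact this

lemma sq_hasFDeriv {n : ℕ} (R : Matrix (Fin n) (Fin n) ℂ) :
    HasFDerivAt (𝕜 := ℝ) (fun X : Matrix (Fin n) (Fin n) ℂ => X * X)
      (LinearMap.toContinuousLinearMap
        (LinearMap.mulLeft ℝ R + LinearMap.mulRight ℝ R)) R := by
  let m := (LinearMap.mul ℝ (Matrix (Fin n) (Fin n) ℂ)).toContinuousBilinearMap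
  have := (m.hasFDerivAt_of_bilinear (hasFDerivAt_id (𝕜 := ℝ) R) (hasFDerivAt_id (𝕜 := ℝ) R))
  convert! this using 1

/-- analytic square root -/
lemma sqrt_local {n : ℕ} (R₀ : Matrix (Fin n) (Fin n) ℂ) (hR : R₀.IsHermitian)
    (hpos : ∀ i, 0 < eigs R₀ i) :
    ∃ s : Matrix (Fin n) (Fin n) ℂ → Matrix (Fin n) (Fin n) ℂ,
      AnalyticAt ℝ s (R₀ * R₀) ∧ s (R₀ * R₀) = R₀ ∧
      (∀ᶠ X in nhds R₀, s (X * X) = X) ∧ (∀ᶠ Y in nhds (R₀ * R₀), s Y * s Y = Y) := by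
  have hinj : Function.Injective (LinearMap.mulLeft ℝ R₀ + LinearMap.mulRight ℝ R₀) := by
    rw [← LinearMap.ker_eq_bot, LinearMap.ker_eq_bot']
    intro Y hY
    exact sylvester R₀ R₀ Y hR hR hpos hpos hY
  let L := (LinearEquiv.ofInjectiveEndo _ hinj).toContinuousLinearEquiv
  have hd : HasFDerivAt (𝕜 := ℝ) (fun X : Matrix (Fin n) (Fin n) ℂ => X * X)
      (L : Matrix (Fin n) (Fin n) ℂ →L[ℝ] Matrix (Fin n) (Fin n) ℂ) R₀ := by
    convert! sq_hasFDeriv R₀ using 1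
  have hc : ContDiffAt ℝ (⊤ : WithTop ℕ∞) (fun X : Matrix (Fin n) (Fin n) ℂ => X * X) R₀ :=
    (an_mul analyticAt_id analyticAt_id).contDiffAt
  have hs := hc.hasStrictFDerivAt' hd (by simp)
  refine ⟨hc.localInverse hd (by simp), ?_, ?_, ?_, ?_⟩
  · exact ContDiffAt.analyticAt (hc.to_localInverse hd (by simp))
  · exact hc.localInverse_apply_image hd (by simp)
  · exact hs.eventually_left_inverse
  · exact hs.eventually_right_inverse

lemma frob_continuous {n : ℕ} : Continuous (frobNorm : Matrix (Fin n) (Fin n) ℂ → ℝ) := by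
  unfold frobNorm
  fun_prop

lemma eigs_tendsto {n : ℕ} (A : ℝ → Matrix (Fin n) (Fin n) ℂ) (hA : ContinuousAt A 0)
    (hh : ∀ᶠ t in nhds 0, (A t).IsHermitian) (i : Fin n) :
    ContinuousAt (fun t => eigs (A t) i) 0 := by
  have h0 := hh.self_of_nhds
  have h1 : Filter.Tendsto (fun t => frobNorm (A t - A 0)) (nhds 0) (nhds 0) := by
    have : ContinuousAt (fun t => frobNorm (A t - A 0)) 0 :=
      frob_continuous.continuousAt.comp (hA.sub continuousAt_const)
    have h2 : frobNorm (A 0 - A 0) = 0 := by simp [frobNorm]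
    unfold ContinuousAt at this
    simpa only [h2] using this
  unfold ContinuousAt
  rw [tendsto_iff_dist_tendsto_zero]
  refine squeeze_zero' (Filter.Eventually.of_forall fun t => dist_nonneg) ?_ h1
  filter_upwards [hh] with t ht
  exact eigs_lip _ _ ht h0 i

lemma conj_mul_conj {n : ℕ} (U : Matrix (Fin n) (Fin n) ℂ) (hU : Uᴴ * U = 1) (f g : Fin n → ℝ) :
    (U * diagonal (fun i => (f i : ℂ)) * Uᴴ) * (U * diagonal (fun i => (g i : ℂ)) * Uᴴ) =
      U * diagonal (fun i => ((f i * g i : ℝ) : ℂ)) * Uᴴ := by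
  calc _ = U * diagonal (fun i => (f i : ℂ)) * (Uᴴ * U) * diagonal (fun i => (g i : ℂ)) * Uᴴ := by
        simp only [mul_assoc]
    _ = U * (diagonal (fun i => (f i : ℂ)) * diagonal (fun i => (g i : ℂ))) * Uᴴ := by
        rw [hU, mul_one]; simp only [mul_assoc]
    _ = _ := by rw [diagonal_mul_diagonal]; simp

lemma trace_conj {n : ℕ} (U : Matrix (Fin n) (Fin n) ℂ) (hU : Uᴴ * U = 1) (f : Fin n → ℝ) :
    (trace (U * diagonal (fun i => (f i : ℂ)) * Uᴴ)).re = ∑ i, f i := by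
  rw [trace_mul_comm, ← mul_assoc, hU, one_mul, trace_diagonal]
  simp

lemma eigs_pos_of {n : ℕ} (U : Matrix (Fin n) (Fin n) ℂ) (hU : Uᴴ * U = 1) (f : Fin n → ℝ)
    (hf : ∀ i, 0 < f i) (i : Fin n) : 0 < eigs (U * diagonal (fun i => (f i : ℂ)) * Uᴴ) i := by
  set σ := Tuple.sort f
  have h : U * diagonal (fun i => (f i : ℂ)) * Uᴴ = (U.submatrix id σ) *
      diagonal (fun i => ((f ∘ σ) i : ℂ)) * (U.submatrix id σ)ᴴ := by
    have : diagonal (fun i => ((f ∘ σ) i : ℂ)) =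
        (diagonal (fun i => (f i : ℂ))).submatrix σ σ := by
      rw [submatrix_diagonal_equiv]; rfl
    rw [this, conjTranspose_submatrix, ← submatrix_mul _ _ id σ σ σ.bijective,
      ← submatrix_mul _ _ id σ id σ.bijective, submatrix_id_id]
  have h2 : (U.submatrix id σ)ᴴ * (U.submatrix id σ) = 1 := by
    rw [conjTranspose_submatrix, ← submatrix_mul _ _ σ id σ Function.bijective_id, hU]
    exact submatrix_one_equiv σ
  rw [h, eigs_unique _ h2 _ (Tuple.monotone_sort f)]
  exact hf _

lemma sq_unique {n : ℕ} (R S : Matrix (Fin n) (Fin n) ℂ) (hR : R.IsHermitian)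
    (hS : S.IsHermitian) (hR0 : ∀ i, 0 < eigs R i) (hS0 : ∀ i, 0 < eigs S i)
    (h : R * R = S * S) : R = S := by
  rw [← sub_eq_zero]
  apply sylvester R S _ hR hS hR0 hS0
  rw [mul_sub, sub_mul, h]; abel

lemma sum_ite_lt {n k : ℕ} (hkn : k ≤ n) (f : Fin n → ℝ) :
    (∑ j : Fin n, if (j : ℕ) < k then f j else 0) =
      ∑ i : Fin k, f ⟨(i : ℕ), lt_of_lt_of_le i.2 hkn⟩ := by
  obtain ⟨m, rfl⟩ := Nat.exists_eq_add_of_le hkn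
  rw [Fin.sum_univ_add]
  simp
  rfl

lemma var_eq {k : ℕ} (hk : 0 < k) (x : Fin k → ℝ) (c : ℝ) :
    ∑ i, (x i - (∑ j, x j) / k) ^ 2 =
      ∑ i, (x i - c) ^ 2 - (∑ i, (x i - c)) ^ 2 / k := by
  have hk' : (k : ℝ) ≠ 0 := by positivity
  simp only [sub_sq, Finset.sum_add_distrib, Finset.sum_sub_distrib, ← Finset.sum_mul,
    ← Finset.mul_sum, Finset.sum_const, Finset.card_univ, Fintype.card_fin, nsmul_eq_mul]
  field_simp
  ring

lemma var_le {k : ℕ} (hk : 0 < k) (x : Fin k → ℝ) (c : ℝ) :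
    ∑ i, (x i - (∑ j, x j) / k) ^ 2 ≤ ∑ i, (x i - c) ^ 2 := by
  rw [var_eq hk x c]
  have : 0 ≤ (∑ i, (x i - c)) ^ 2 / k := by positivity
  linarith

lemma var_pairs {k : ℕ} (hk : 0 < k) (x : Fin k → ℝ) :
    ∑ i, (x i - (∑ j, x j) / k) ^ 2 = (2 * k : ℝ)⁻¹ * ∑ i, ∑ j, (x i - x j) ^ 2 := by
  have hk' : (k : ℝ) ≠ 0 := by positivity
  simp only [sub_sq, Finset.sum_add_distrib, Finset.sum_sub_distrib, ← Finset.sum_mul,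
    ← Finset.mul_sum, Finset.sum_const, Finset.card_univ, Fintype.card_fin, nsmul_eq_mul]
  field_simp
  ring

lemma dist_eq {n k : ℕ} (hk : 0 < k) (hkn : k < n) (H : Matrix (Fin n) (Fin n) ℂ)
    (hH : H.IsHermitian) (hlt : lamBar k H < eigs H ⟨k, hkn⟩) :
    (sInf ((fun G => frobNorm (H - G)) '' SigmaSet n k)) ^ 2
        = ∑ j : Fin n, if (j : ℕ) < k then (eigs H j - lamBar k H) ^ 2 else 0 := by
  set S := ∑ j : Fin n, if (j : ℕ) < k then (eigs H j - lamBar k H) ^ 2 else 0 with hS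
  have hS0 : 0 ≤ S := Finset.sum_nonneg fun j _ => by split_ifs <;> positivity
  have hl : lamBar k H = (∑ i : Fin k, eigs H ⟨(i : ℕ), lt_of_lt_of_le i.2 hkn.le⟩) / k := by
    unfold lamBar; rw [sum_ite_lt hkn.le]
  have hleast : IsLeast ((fun G => frobNorm (H - G)) '' SigmaSet n k) (Real.sqrt S) := by
    constructor
    · obtain ⟨U, hU1, hU2, hUH⟩ := eigs_spectral H hH
      let g : Fin n → ℝ := fun j => if (j : ℕ) < k then lamBar k H else eigs H j
      have hg : Monotone g := by
        intro i j hij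
        have hij' : (i : ℕ) ≤ j := hij
        simp only [g]
        split_ifs with h1 h2 h2
        · exact le_rfl
        · refine hlt.le.trans (eigs_mono H ?_)
          show k ≤ (j : ℕ)
          omega
        · omega
        · exact eigs_mono H hij
      have hG := eigs_unique U hU1 g hg
      refine ⟨U * diagonal (fun i => (g i : ℂ)) * Uᴴ, ⟨isHerm_diag U g, ?_, ?_⟩, ?_⟩
      · intro i j hi hj
        rw [hG]; simp [g, hi, hj]
      · intro i j hi hj
        rw [hG]
        have : j = ⟨k, hkn⟩ := Fin.ext hj
        subst this
        simpa [g, hi] using hlt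
      · show frobNorm (H - U * diagonal (fun i => (g i : ℂ)) * Uᴴ) = _
        have h2 := frob_unitary U U (H - U * diagonal (fun i => (g i : ℂ)) * Uᴴ) hU2 hU2
        have h3 : Uᴴ * (H - U * diagonal (fun i => (g i : ℂ)) * Uᴴ) * U =
            diagonal (fun i => ((eigs H i - g i : ℝ) : ℂ)) := by
          have e : ∀ D : Matrix (Fin n) (Fin n) ℂ, Uᴴ * (U * D * Uᴴ) * U = D := by
            intro D
            calc _ = (Uᴴ * U) * D * (Uᴴ * U) := by simp only [mul_assoc]
              _ = D := by rw [hU1]; simp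
          rw [mul_sub, sub_mul, e]
          conv_lhs => rw [hUH]
          rw [e, diagonal_sub]
          simp
        rw [h3] at h2
        have h4 : frobNorm (diagonal (fun i => ((eigs H i - g i : ℝ) : ℂ))) ^ 2 = S := by
          unfold frobNorm
          rw [Real.sq_sqrt (by positivity), hS]
          refine Finset.sum_congr rfl fun i _ => ?_
          rw [Finset.sum_eq_single i]
          · rw [diagonal_apply_eq, Complex.norm_real, Real.norm_eq_abs, sq_abs]
            simp only [g]
            split_ifs <;> simp
          · intro j _ hj
            rw [diagonal_apply_ne _ hj.symm]; simp
          · simp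
        rw [← h4, h2]
        exact (Real.sqrt_sq (Real.sqrt_nonneg _)).symm
    · rintro _ ⟨G, ⟨hG1, hG2, hG3⟩, rfl⟩
      refine Real.sqrt_le_iff.2 ⟨Real.sqrt_nonneg _, ?_⟩
      refine le_trans ?_ (hoffman_wielandt H G hH hG1)
      have i0 : Fin n := ⟨0, by omega⟩
      have hsub : (∑ j : Fin n, if (j : ℕ) < k then (eigs H j - eigs G j) ^ 2 else 0) ≤
          ∑ j, (eigs H j - eigs G j) ^ 2 :=
        Finset.sum_le_sum fun j _ => by split_ifs <;> first | exact le_rfl | positivity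
      refine le_trans ?_ hsub
      rw [hS, sum_ite_lt hkn.le, sum_ite_lt hkn.le, hl]
      refine (var_le hk _ (eigs G ⟨0, by omega⟩)).trans_eq ?_
      refine Finset.sum_congr rfl fun i _ => ?_
      rw [hG2 ⟨0, by omega⟩ ⟨(i : ℕ), lt_of_lt_of_le i.2 hkn.le⟩ hk i.2]
  rw [hleast.csInf_eq, Real.sq_sqrt hS0]

lemma analytic_core {n k : ℕ} (hk : 0 < k) (hkn : k < n)
    (H : ℝ → Matrix (Fin n) (Fin n) ℂ) (c : ℝ) (hanal : AnalyticAt ℝ H 0)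
    (hherm : ∀ᶠ t in nhds 0, (H t).IsHermitian)
    (hgap : ∀ᶠ t in nhds 0, ∀ j : Fin n, ((j : ℕ) < k → eigs (H t) j < c) ∧
      (k ≤ (j : ℕ) → c < eigs (H t) j)) :
    AnalyticAt ℝ (fun t => ∑ j : Fin n,
      if (j : ℕ) < k then (eigs (H t) j - lamBar k (H t)) ^ 2 else 0) 0 := by
  let K : ℝ → Matrix (Fin n) (Fin n) ℂ := fun t => H t - (c : ℂ) • 1
  have hK : AnalyticAt ℝ K 0 := hanal.sub analyticAt_const
  have hKU : ∀ t (U : Matrix (Fin n) (Fin n) ℂ), U * Uᴴ = 1 →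
      H t = U * diagonal (fun i => (eigs (H t) i : ℂ)) * Uᴴ →
      K t = U * diagonal (fun i => ((eigs (H t) i - c : ℝ) : ℂ)) * Uᴴ := by
    intro t U hU h
    have : diagonal (fun i => ((eigs (H t) i - c : ℝ) : ℂ)) =
        diagonal (fun i => (eigs (H t) i : ℂ)) - (c : ℂ) • (1 : Matrix (Fin n) (Fin n) ℂ) := by
      rw [← diagonal_one, ← diagonal_smul, diagonal_sub]
      congr 1; ext i; simp
    rw [this, mul_sub, sub_mul, ← h]
    simp [K, hU]
  have hne : ∀ t, (∀ j : Fin n, ((j : ℕ) < k → eigs (H t) j < c) ∧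
      (k ≤ (j : ℕ) → c < eigs (H t) j)) → ∀ j, 0 < |eigs (H t) j - c| := by
    intro t h j
    rw [abs_pos, sub_ne_zero]
    rcases lt_or_ge (j : ℕ) k with h' | h'
    · exact ((h j).1 h').ne
    · exact ((h j).2 h').ne'
  -- at zero
  obtain ⟨U₀, hU1, hU2, hUH⟩ := eigs_spectral (H 0) hherm.self_of_nhds
  set R₀ := U₀ * diagonal (fun i => ((|eigs (H 0) i - c| : ℝ) : ℂ)) * U₀ᴴ with hR₀
  have hR₀h : R₀.IsHermitian := isHerm_diag _ _
  have hR₀p : ∀ i, 0 < eigs R₀ i := eigs_pos_of U₀ hU1 _ (hne 0 hgap.self_of_nhds)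
  have hRK : R₀ * R₀ = K 0 * K 0 := by
    rw [hKU 0 U₀ hU2 hUH, hR₀, conj_mul_conj _ hU1, conj_mul_conj _ hU1]
    simp only [abs_mul_abs_self]
  obtain ⟨s, hs1, hs2, hs3, hs4⟩ := sqrt_local R₀ hR₀h hR₀p
  let R : ℝ → Matrix (Fin n) (Fin n) ℂ := fun t => s (K t * K t)
  have hKK : AnalyticAt ℝ (fun t => K t * K t) 0 := an_mul hK hK
  have hR : AnalyticAt ℝ R 0 := by
    rw [hRK] at hs1
    exact AnalyticAt.comp (g := s) hs1 hKK
  have hR0 : R 0 = R₀ := by simp only [R]; rw [← hRK, hs2]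
  have hRsq : ∀ᶠ t in nhds 0, R t * R t = K t * K t := by
    rw [hRK] at hs4
    exact hKK.continuousAt.eventually hs4
  have hRherm : ∀ᶠ t in nhds 0, (R t).IsHermitian := by
    have hc : ContinuousAt (fun t => (R t)ᴴ) 0 :=
      (continuous_id.matrix_conjTranspose).continuousAt.comp hR.continuousAt
    have hc0 : (R 0)ᴴ = R₀ := by rw [hR0]; exact hR₀h
    have h1 : ∀ᶠ t in nhds (0 : ℝ), s ((R t)ᴴ * (R t)ᴴ) = (R t)ᴴ := by
      rw [← hc0] at hs3
      exact hc.eventually hs3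
    filter_upwards [h1, hRsq, hherm] with t h1 h2 h3
    have hKh : (K t)ᴴ = K t := by
      simp only [K, conjTranspose_sub, conjTranspose_smul, conjTranspose_one, h3.eq]
      simp
    rw [← conjTranspose_mul, h2, conjTranspose_mul, hKh] at h1
    exact h1.symm
  have hRpos : ∀ᶠ t in nhds 0, ∀ i, 0 < eigs (R t) i := by
    rw [Filter.eventually_all]
    intro i
    apply (eigs_tendsto R hR.continuousAt hRherm i).eventually_const_lt
    simp only [hR0]; exact hR₀p i
  -- trace functional
  let T : Matrix (Fin n) (Fin n) ℂ →L[ℝ] ℝ := LinearMap.toContinuousLinearMap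
    (Complex.reLm.comp (traceLinearMap (Fin n) ℝ ℂ))
  have hT : ∀ M, T M = (trace M).re := fun M => rfl
  have hF : AnalyticAt ℝ (fun t => (T (K t * K t - K t * R t)) / 2 -
      ((T (K t - R t)) / 2) ^ 2 / k) 0 := by
    have a1 : AnalyticAt ℝ (fun t => T (K t * K t - K t * R t)) 0 :=
      (T.analyticAt _).comp (hKK.sub (an_mul hK hR))
    have a2 : AnalyticAt ℝ (fun t => T (K t - R t)) 0 :=
      (T.analyticAt _).comp (hK.sub hR)
    exact (a1.div_const).sub (((a2.div_const).pow 2).div_const)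
  refine hF.congr ?_
  filter_upwards [hherm, hgap, hRsq, hRherm, hRpos] with t h1 h2 h3 h4 h5
  obtain ⟨U, hU1, hU2, hUH⟩ := eigs_spectral (H t) h1
  have hKt := hKU t U hU2 hUH
  have hRt : R t = U * diagonal (fun i => ((|eigs (H t) i - c| : ℝ) : ℂ)) * Uᴴ := by
    apply sq_unique _ _ h4 (isHerm_diag _ _) h5 (eigs_pos_of U hU1 _ (hne t h2))
    rw [h3, hKt, conj_mul_conj _ hU1, conj_mul_conj _ hU1]
    simp only [abs_mul_abs_self]
  have t1 : T (K t * K t - K t * R t) / 2 =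
      ∑ i : Fin k, (eigs (H t) ⟨(i : ℕ), lt_of_lt_of_le i.2 hkn.le⟩ - c) ^ 2 := by
    rw [← sum_ite_lt hkn.le (fun j => (eigs (H t) j - c) ^ 2), map_sub, hT, hT, hRt, hKt,
      conj_mul_conj _ hU1, conj_mul_conj _ hU1, trace_conj _ hU1, trace_conj _ hU1,
      ← Finset.sum_sub_distrib, Finset.sum_div]
    refine Finset.sum_congr rfl fun j _ => ?_
    split_ifs with hj
    · rw [abs_of_neg (sub_neg.2 ((h2 j).1 hj))]; ring
    · rw [abs_of_pos (sub_pos.2 ((h2 j).2 (not_lt.1 hj)))]; ring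
  have t2 : T (K t - R t) / 2 =
      ∑ i : Fin k, (eigs (H t) ⟨(i : ℕ), lt_of_lt_of_le i.2 hkn.le⟩ - c) := by
    rw [← sum_ite_lt hkn.le (fun j => (eigs (H t) j - c)), map_sub, hT, hT, hRt, hKt,
      trace_conj _ hU1, trace_conj _ hU1,
      ← Finset.sum_sub_distrib, Finset.sum_div]
    refine Finset.sum_congr rfl fun j _ => ?_
    split_ifs with hj
    · rw [abs_of_neg (sub_neg.2 ((h2 j).1 hj))]; ring
    · rw [abs_of_pos (sub_pos.2 ((h2 j).2 (not_lt.1 hj)))]; ring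
  have hl : lamBar k (H t) =
      (∑ i : Fin k, eigs (H t) ⟨(i : ℕ), lt_of_lt_of_le i.2 hkn.le⟩) / k := by
    unfold lamBar; rw [sum_ite_lt hkn.le]
  show T (K t * K t - K t * R t) / 2 - (T (K t - R t) / 2) ^ 2 / k = _
  rw [t1, t2, sum_ite_lt hkn.le, hl, var_eq hk _ c]

lemma ord0_eq (f : ℝ → ℝ) (hf : AnalyticAt ℝ f 0) : ord0 f = analyticOrderAt f 0 := by
  refine ENat.eq_of_forall_natCast_le_iff fun m => ?_
  rw [natCast_le_analyticOrderAt_iff_iteratedDeriv_eq_zero hf]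
  unfold ord0
  rw [le_sInf_iff]
  constructor
  · intro h i hi
    by_contra hne
    have := h i ⟨i, rfl, hne⟩
    have : m ≤ i := by exact_mod_cast this
    omega
  · rintro h _ ⟨j, rfl, hj⟩
    by_contra hlt
    exact hj (h j (by exact_mod_cast not_le.1 hlt))

lemma order_sum_sq {ι : Type*} [Fintype ι] (g : ι → ℝ → ℝ) (hg : ∀ i, AnalyticAt ℝ (g i) 0)
    (a : ℝ) (ha : 0 < a) :
    analyticOrderAt (fun t => a * ∑ i, g i t ^ 2) 0 = 2 * ⨅ i, analyticOrderAt (g i) 0 := by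
  have hF : AnalyticAt ℝ (fun t => a * ∑ i, g i t ^ 2) 0 :=
    analyticAt_const.mul (Finset.analyticAt_fun_sum _ fun i _ => (hg i).pow 2)
  by_cases htop : (⨅ i, analyticOrderAt (g i) 0) = ⊤
  · rw [htop]
    have h1 : ∀ i, analyticOrderAt (g i) 0 = ⊤ := iInf_eq_top.1 htop
    have h2 : ∀ᶠ t in nhds (0 : ℝ), ∀ i, g i t = 0 :=
      Filter.eventually_all.2 fun i => analyticOrderAt_eq_top.1 (h1 i)
    have : analyticOrderAt (fun t => a * ∑ i, g i t ^ 2) 0 = ⊤ := by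
      rw [analyticOrderAt_eq_top]
      filter_upwards [h2] with t ht
      simp [ht]
    rw [this]; rfl
  · obtain ⟨m, hm⟩ := ENat.ne_top_iff_exists.1 htop
    have hne : Nonempty ι := by
      by_contra h
      rw [not_nonempty_iff] at h
      exact htop (by simp)
    have h1 : ∀ i, ∃ u : ℝ → ℝ, AnalyticAt ℝ u 0 ∧ ∀ᶠ t in nhds (0 : ℝ), g i t = (t - 0) ^ m • u t := by
      intro i
      rw [← natCast_le_analyticOrderAt (hg i), hm]
      exact iInf_le _ i
    choose u hu1 hu2 using h1
    obtain ⟨i0, hi0⟩ : ∃ i, analyticOrderAt (g i) 0 = m := by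
      obtain ⟨i, hi⟩ := exists_eq_ciInf_of_finite (f := fun i => analyticOrderAt (g i) 0)
      exact ⟨i, hi.trans hm.symm⟩
    have hu0 : u i0 0 ≠ 0 := by
      obtain ⟨v, hv1, hv2, hv3⟩ := ((hg i0).analyticOrderAt_eq_natCast).1 hi0
      intro h0
      have : ((m + 1 : ℕ) : ℕ∞) ≤ analyticOrderAt (g i0) 0 := by
        have e : analyticOrderAt (g i0) 0 = analyticOrderAt (fun t : ℝ => t ^ m * u i0 t) 0 := by
          apply analyticOrderAt_congr
          filter_upwards [hu2 i0] with t ht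
          simpa using ht
        have hp : AnalyticAt ℝ (fun t : ℝ => t ^ m) 0 := analyticAt_id.pow m
        have hp' : analyticOrderAt (fun t : ℝ => t ^ m) 0 = m := by
          have := analyticOrderAt_pow (analyticAt_id (𝕜 := ℝ) (z := (0 : ℝ))) m
          rw [analyticOrderAt_id] at this
          rw [nsmul_one] at this
          exact this
        rw [e]
        have := analyticOrderAt_mul hp (hu1 i0)
        change analyticOrderAt (fun t : ℝ => t ^ m * u i0 t) 0 = _ at this
        rw [this, hp']
        push_cast
        gcongr
        rw [Order.one_le_iff_ne_zero]
        exact (hu1 i0).analyticOrderAt_ne_zero.2 h0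
      rw [hi0] at this
      have : m + 1 ≤ m := by exact_mod_cast this
      omega
    rw [← hm]
    have : analyticOrderAt (fun t => a * ∑ i, g i t ^ 2) 0 = ((2 * m : ℕ) : ℕ∞) := by
      rw [hF.analyticOrderAt_eq_natCast]
      refine ⟨fun t => a * ∑ i, u i t ^ 2,
        analyticAt_const.mul (Finset.analyticAt_fun_sum _ fun i _ => (hu1 i).pow 2), ?_, ?_⟩
      · apply ne_of_gt
        apply mul_pos ha
        have := Finset.single_le_sum (f := fun i => u i 0 ^ 2) (fun i _ => sq_nonneg _)
          (Finset.mem_univ i0)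
        have : 0 < u i0 0 ^ 2 := by positivity
        linarith
      · filter_upwards [Filter.eventually_all.2 hu2] with t ht
        simp only [ht, sub_zero, smul_eq_mul, mul_pow, Finset.mul_sum]
        refine Finset.sum_congr rfl fun i _ => ?_
        ring
    rw [this]; push_cast; rfl

/-- **Order of distancing equals order of energy splitting:** for an analytic one-parameter
Hermitian family `H(t)` with `H(0) ∈ Σ_k`, for small `t` the squared distance to `Σ_k` equals
`Σ_{j≤k} (λ_j(H(t)) − λ̄(t))²`, it is real-analytic at `0`, and its order at `0` is twice the
minimal order of the pairwise differences of the (analytically re-indexed) lowest `k`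
eigenvalues. -/
theorem order_distancing_eq_order_splitting {n k : ℕ} (hk2 : 2 ≤ k) (hkn : k < n)
    (H : ℝ → Matrix (Fin n) (Fin n) ℂ) (δ : ℝ) (hδ : 0 < δ)
    (hanal : AnalyticOnNhd ℝ H (Set.Ioo (-δ) δ))
    (hherm : ∀ t ∈ Set.Ioo (-δ) δ, (H t).IsHermitian)
    (h0 : H 0 ∈ SigmaSet n k) :
    (∃ ε > 0, ∀ t : ℝ, |t| < ε →
      (sInf ((fun G => frobNorm (H t - G)) '' SigmaSet n k)) ^ 2
        = ∑ j : Fin n, if (j : ℕ) < k then (eigs (H t) j - lamBar k (H t)) ^ 2 else 0) ∧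
    AnalyticAt ℝ (fun t => (sInf ((fun G => frobNorm (H t - G)) '' SigmaSet n k)) ^ 2) 0 ∧
    ∀ lt : Fin k → ℝ → ℝ, (∀ i, AnalyticAt ℝ (lt i) 0) →
      (∃ ε > 0, ∀ t : ℝ, |t| < ε →
        (Finset.univ.val.map fun i : Fin k => lt i t)
          = Finset.univ.val.map fun i : Fin k =>
              eigs (H t) ⟨(i : ℕ), lt_of_lt_of_le i.2 hkn.le⟩) →
      ord0 (fun t => (sInf ((fun G => frobNorm (H t - G)) '' SigmaSet n k)) ^ 2)
        = 2 * ⨅ (i : Fin k) (j : Fin k) (_ : i < j), ord0 (fun t => lt i t - lt j t) := by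
  have hk : 0 < k := by omega
  have hk' : (0 : ℝ) < k := by exact_mod_cast hk
  have hA : AnalyticAt ℝ H 0 := hanal 0 ⟨by linarith, hδ⟩
  have hh : ∀ᶠ t in nhds (0 : ℝ), (H t).IsHermitian := by
    filter_upwards [Ioo_mem_nhds (neg_lt_zero.2 hδ) hδ] with t ht using hherm t ht
  obtain ⟨c, hgap⟩ : ∃ c : ℝ, ∀ᶠ t in nhds (0 : ℝ), ∀ j : Fin n,
      ((j : ℕ) < k → eigs (H t) j < c) ∧ (k ≤ (j : ℕ) → c < eigs (H t) j) := by
    obtain ⟨-, h1, h2⟩ := h0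
    have h3 := h2 ⟨0, by omega⟩ ⟨k, hkn⟩ hk rfl
    obtain ⟨c, hc1, hc2⟩ := exists_between h3
    refine ⟨c, Filter.eventually_all.2 fun j => ?_⟩
    have hcont := eigs_tendsto H hA.continuousAt hh j
    rcases lt_or_ge (j : ℕ) k with hj | hj
    · have : eigs (H 0) j < c := by rw [h1 j ⟨0, by omega⟩ hj hk]; exact hc1
      filter_upwards [hcont.eventually_lt_const this] with t ht
      exact ⟨fun _ => ht, fun h => absurd hj (not_lt.2 h)⟩
    · have : c < eigs (H 0) j := hc2.trans_le (eigs_mono _ hj)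
      filter_upwards [hcont.eventually_const_lt this] with t ht
      exact ⟨fun h => absurd hj (not_le.2 h), fun _ => ht⟩
  have hev : ∀ᶠ t in nhds (0 : ℝ),
      (sInf ((fun G => frobNorm (H t - G)) '' SigmaSet n k)) ^ 2
        = ∑ j : Fin n, if (j : ℕ) < k then (eigs (H t) j - lamBar k (H t)) ^ 2 else 0 := by
    filter_upwards [hh, hgap] with t h1 h2
    apply dist_eq hk hkn _ h1
    refine lt_of_le_of_lt ?_ ((h2 ⟨k, hkn⟩).2 le_rfl)
    unfold lamBar
    rw [sum_ite_lt hkn.le, div_le_iff₀ hk']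
    calc _ ≤ ∑ i : Fin k, c := Finset.sum_le_sum fun i _ => ((h2 _).1 i.2).le
      _ = c * k := by simp [mul_comm]
  have han : AnalyticAt ℝ
      (fun t => (sInf ((fun G => frobNorm (H t - G)) '' SigmaSet n k)) ^ 2) 0 := by
    refine (analytic_core hk hkn H c hA hh hgap).congr ?_
    filter_upwards [hev] with t ht using ht.symm
  refine ⟨?_, han, ?_⟩
  · obtain ⟨ε, hε, h⟩ := Metric.eventually_nhds_iff.1 hev
    exact ⟨ε, hε, fun t ht => h (by simpa using ht)⟩
  · rintro lt hlt ⟨ε, hε, hms⟩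
    have hms' : ∀ᶠ t in nhds (0 : ℝ), (Finset.univ.val.map fun i : Fin k => lt i t)
          = Finset.univ.val.map fun i : Fin k =>
              eigs (H t) ⟨(i : ℕ), lt_of_lt_of_le i.2 hkn.le⟩ :=
      Metric.eventually_nhds_iff.2 ⟨ε, hε, fun t ht => hms t (by simpa using ht)⟩
    have hsub : ∀ i j, AnalyticAt ℝ (fun t => lt i t - lt j t) 0 :=
      fun i j => (hlt i).sub (hlt j)
    rw [ord0_eq _ han]
    have e1 : analyticOrderAt
        (fun t => (sInf ((fun G => frobNorm (H t - G)) '' SigmaSet n k)) ^ 2) 0 =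
        analyticOrderAt (fun t => (2 * k : ℝ)⁻¹ *
          ∑ p : Fin k × Fin k, (lt p.1 t - lt p.2 t) ^ 2) 0 := by
      apply analyticOrderAt_congr
      filter_upwards [hev, hms'] with t h1 h2
      have hsum : ∀ φ : ℝ → ℝ, ∑ i, φ (lt i t) =
          ∑ i : Fin k, φ (eigs (H t) ⟨(i : ℕ), lt_of_lt_of_le i.2 hkn.le⟩) := by
        intro φ
        have := congrArg (fun s => (Multiset.map φ s).sum) h2
        simp only [Multiset.map_map] at this
        exact this
      rw [h1, sum_ite_lt hkn.le (fun j => (eigs (H t) j - lamBar k (H t)) ^ 2),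
        ← hsum (fun x => (x - lamBar k (H t)) ^ 2)]
      have hl : lamBar k (H t) = (∑ i, lt i t) / k := by
        unfold lamBar; rw [sum_ite_lt hkn.le, ← hsum (fun x => x)]
      rw [hl, var_pairs hk, Fintype.sum_prod_type]
    rw [e1, order_sum_sq (fun (p : Fin k × Fin k) t => lt p.1 t - lt p.2 t)
      (fun p => hsub p.1 p.2) _ (by positivity)]
    congr 1
    have hself : ∀ i, analyticOrderAt (fun t => lt i t - lt i t) 0 = ⊤ := fun i => by
      rw [analyticOrderAt_eq_top]; simp
    have hsymm : ∀ i j, analyticOrderAt (fun t => lt i t - lt j t) 0 =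
        analyticOrderAt (fun t => lt j t - lt i t) 0 := fun i j => by
      rw [← analyticOrderAt_neg]
      congr 1; ext t; simp
    apply le_antisymm
    · refine le_iInf fun i => le_iInf fun j => le_iInf fun _ => ?_
      rw [ord0_eq _ (hsub i j)]
      exact iInf_le (fun p : Fin k × Fin k => analyticOrderAt (fun t => lt p.1 t - lt p.2 t) 0)
        (i, j)
    · refine le_iInf fun p => ?_
      obtain ⟨i, j⟩ := p
      have hle : ∀ i j : Fin k, i < j → (⨅ (i : Fin k) (j : Fin k) (_ : i < j),
          ord0 (fun t => lt i t - lt j t)) ≤ analyticOrderAt (fun t => lt i t - lt j t) 0 := by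
        intro i j hij
        rw [← ord0_eq _ (hsub i j)]
        exact iInf_le_of_le i (iInf_le_of_le j (iInf_le _ hij))
      rcases lt_trichotomy i j with h | h | h
      · exact hle i j h
      · subst h; simp only [hself]; exact le_top
      · simp only; rw [hsymm]; exact hle j i h

end
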